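/- Let ε ∈ (0,1) be irrational with continued fraction expansion ε = [0; a_1, a_2, …] whose partial quotients are bounded, let ℓ satisfy max{ε, 1−ε} < ℓ < 1, and let x0 ∈ [0,ℓ). Then the index of the 3iet word satisfies ind(u_{ε,ℓ,x0}) ≥ sup_{n} ⌊a_n/2⌋. -/

import Mathlib

/-!
The map `T3 ε ℓ` is the first-return map to `[0, ℓ)` of the rotation `t ↦ t - ε` of `ℝ / ℤ`. Code
the rotation by the letter of `T3` on `[0, ℓ)` and by a blank on `[ℓ, 1)`; erasing the blanks from
the coding of the orbit of `x0` gives `u3 ε ℓ x0`.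

Let `a = a_{n+1}` and let `p / q` be the `n`-th convergent of `ε`, so that `θ = q ε - p` satisfies
`a q |θ| < 1`. The `q`-th iterate of the rotation is the translation by `-θ`, and the symbols of `t`
and `t - θ` agree unless the arc between them meets one of the endpoints `0`, `ℓ`, `ε`, `ℓ - 1 + ε`.
The rotation sends the last two to `0` and `ℓ`, so the coding has period `q` on the window of length
`k q` starting at `y` as soon as the `2 k q` arcs of length `|θ|` attached to `i ε` and `i ε + ℓ`,
`0 ≤ i < k q`, do not contain `y`. For `k = ⌊a / 2⌋` their total length is at most `a q |θ| < 1`;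
hence they miss a nonempty open set, which the dense orbit of `x0` visits. Erasing the blanks from
the resulting `k`-th power leaves a `k`-th power in `u3 ε ℓ x0`.
-/

/-- The alphabet of 3iet words. -/
inductive L3 | A | B | C
deriving DecidableEq, Inhabited

/-- The three-interval exchange transformation `T_{ε,ℓ}`. -/
noncomputable def T3 (ε ℓ : ℝ) (x : ℝ) : ℝ :=
  if x < ℓ - 1 + ε then x + 1 - ε
  else if x < ε then x + 1 - 2*ε
  else x - ε

/-- The 3iet word `u_{ε,ℓ,x0}` coding the orbit of `x0` under `T_{ε,ℓ}`. -/
noncomputable def u3 (ε ℓ x0 : ℝ) (n : ℕ) : L3 :=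
  if (T3 ε ℓ)^[n] x0 < ℓ - 1 + ε then L3.A
  else if (T3 ε ℓ)^[n] x0 < ε then L3.B
  else L3.C

/-- The two-interval exchange transformation `T_ε`. -/
noncomputable def T2 (ε : ℝ) (x : ℝ) : ℝ := if x < ε then x + 1 - ε else x - ε

/-- The Sturmian word `u_{ε,x0}` of slope `ε` coding the orbit of `x0` under `T_ε`
(letter `0` is `false`, letter `1` is `true`). -/
noncomputable def u2 (ε x0 : ℝ) (n : ℕ) : Bool := if (T2 ε)^[n] x0 < ε then false else true

/-- `w` is a factor of the infinite word `u`. -/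
def IsFactor {α : Type*} (w : List α) (u : ℕ → α) : Prop :=
  ∃ i : ℕ, w = (List.range w.length).map fun j => u (i + j)

/-- The prefix of length `m` of the periodic infinite word `www⋯`;
for `|w| ≤ m` this is the fractional power `w^{m/|w|}`. -/
def powPrefix {α : Type*} [Inhabited α] (w : List α) (m : ℕ) : List α :=
  (List.range m).map fun j => w.getD (j % w.length) default

/-- The index of the factor `w` in the infinite word `u`:
`sup {r ∈ ℚ, r ≥ 1, r|w| ∈ ℕ | w^r is a factor of u}`, as an element of `ℝ ∪ {+∞}`. -/
noncomputable def factorIndex {α : Type*} [Inhabited α] (u : ℕ → α) (w : List α) : EReal :=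
  sSup {x : EReal | ∃ m : ℕ, w.length ≤ m ∧ IsFactor (powPrefix w m) u ∧
    x = (((m : ℝ) / (w.length : ℝ) : ℝ) : EReal)}

/-- The index of the infinite word `u`: `sup {ind(w) | w a nonempty factor of u}`. -/
noncomputable def wordIndex {α : Type*} [Inhabited α] (u : ℕ → α) : EReal :=
  sSup {x : EReal | ∃ w : List α, w ≠ [] ∧ IsFactor w u ∧ x = factorIndex u w}

/-- The Gauss map `x ↦ {1/x}`. -/
noncomputable def gaussMap (x : ℝ) : ℝ := Int.fract x⁻¹

/-- `cfa ε n` is the partial quotient `a_{n+1}` of the continued fraction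
expansion `ε = [0; a₁, a₂, a₃, …]` of the irrational `ε ∈ (0,1)`. -/
noncomputable def cfa (ε : ℝ) (n : ℕ) : ℕ := ⌊(gaussMap^[n] ε)⁻¹⌋₊

/-- The morphism `σ01 : A ↦ 0, B ↦ 01, C ↦ 1`. -/
def sigma01 : L3 → List Bool
  | L3.A => [false]
  | L3.B => [false, true]
  | L3.C => [true]

/-- The morphism `σ10 : A ↦ 0, B ↦ 10, C ↦ 1`. -/
def sigma10 : L3 → List Bool
  | L3.A => [false]
  | L3.B => [true, false]
  | L3.C => [true]

/-- The image `φ(u₀)φ(u₁)φ(u₂)⋯` of an infinite word `u` under a (nonerasing) morphism `φ`. -/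
def morphWord (φ : L3 → List Bool) (u : ℕ → L3) (m : ℕ) : Bool :=
  ((List.range (m+1)).flatMap fun k => φ (u k)).getD m false

/-- `u` is a uniformly recurrent infinite word: every factor occurs infinitely often
with bounded gaps (every window of some length `R` contains an occurrence). -/
def UniformlyRecurrent {α : Type*} (u : ℕ → α) : Prop :=
  ∀ w : List α, IsFactor w u → ∃ R : ℕ, ∀ i : ℕ, ∃ j : ℕ, i ≤ j ∧ j < i + R ∧
    w = (List.range w.length).map fun t => u (j + t)

/-- `u` is eventually periodic. -/
def EventuallyPeriodic {α : Type*} (u : ℕ → α) : Prop :=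
  ∃ N p : ℕ, 0 < p ∧ ∀ n : ℕ, N ≤ n → u (n + p) = u n

/-- The standard words of `ε = [0; a₁, a₂, …]`, with the index shifted by one:
`sw ε 0 = s₋₁ = 1`, `sw ε 1 = s₀ = 0`, `sw ε 2 = s₁ = s₀^{a₁-1} s₋₁`, and
`sw ε (n+3) = s_{n+2} = s_{n+1}^{a_{n+2}} s_n`. -/
noncomputable def sw (ε : ℝ) : ℕ → List Bool
  | 0 => [true]
  | 1 => [false]
  | 2 => (List.replicate (cfa ε 0 - 1) ([false] : List Bool)).flatten ++ [true]
  | (n+3) => (List.replicate (cfa ε (n+1)) (sw ε (n+2))).flatten ++ sw ε (n+1)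

/-- Denominators of the convergents of `ε`, shifted by one: `qq ε 0 = q₋₁ = 0`,
`qq ε 1 = q₀ = 1`, and `qq ε (n+2) = q_{n+1} = a_{n+1} q_n + q_{n-1}`. -/
noncomputable def qq (ε : ℝ) : ℕ → ℕ
  | 0 => 0
  | 1 => 1
  | (n+2) => cfa ε n * qq ε (n+1) + qq ε n

/-- `u` is a 3iet word. -/
def Is3ietWord (u : ℕ → L3) : Prop :=
  ∃ ε ℓ x0 : ℝ, Irrational ε ∧ 0 < ε ∧ ε < 1 ∧ max ε (1 - ε) < ℓ ∧ ℓ < 1 ∧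
    x0 ∈ Set.Ico 0 ℓ ∧ u = u3 ε ℓ x0

/-- `v` is a Sturmian word. -/
def IsSturmianWord (v : ℕ → Bool) : Prop :=
  ∃ ε x0 : ℝ, Irrational ε ∧ 0 < ε ∧ ε < 1 ∧ x0 ∈ Set.Ico (0:ℝ) 1 ∧ v = u2 ε x0

/-- The infinite binary word `v1` is amicable with `v2` (`v1 ∝ v2`). -/
def AmicableInf (v1 v2 : ℕ → Bool) : Prop :=
  ∃ w : ℕ → L3, v1 = morphWord sigma01 w ∧ v2 = morphWord sigma10 w

/-- The morphism `Φ_k : A ↦ 0, B ↦ 01^{k+1}, C ↦ 01^k`. -/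
def Phi (k : ℕ) : L3 → List Bool
  | L3.A => [false]
  | L3.B => false :: List.replicate (k+1) true
  | L3.C => false :: List.replicate k true

/-- The infinite word `B₀B₁B₂⋯` obtained by concatenating the sequence of
(nonempty) blocks `B`. -/
def concatOfBlocks (B : ℕ → List Bool) (m : ℕ) : Bool :=
  ((List.range (m+1)).flatMap B).getD m false

/-! ### Continued fractions -/

/-- The product `x₀ x₁ ⋯ xₙ₋₁` of the first `n` iterates `xᵢ` of `ε` under the Gauss map. In the
indexing of `qq` it is the approximation error `|qq ε n * ε - p|`, `p` being the numerator that
belongs to `qq ε n`. -/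
noncomputable def gaussProd (ε : ℝ) (n : ℕ) : ℝ := ∏ i ∈ Finset.range n, gaussMap^[i] ε

theorem irrational_gaussMap_iterate {ε : ℝ} (hirr : Irrational ε) (n : ℕ) :
    Irrational (gaussMap^[n] ε) := by
  induction n with
  | zero => exact hirr
  | succ n ih =>
    rw [Function.iterate_succ_apply']
    exact (irrational_inv_iff.2 ih).sub_intCast _

section ContinuedFraction

variable {ε : ℝ} (hirr : Irrational ε) (hε : ε ∈ Set.Ioo 0 1)
include hirr hε

theorem gaussMap_iterate_mem_Ioo (n : ℕ) : gaussMap^[n] ε ∈ Set.Ioo 0 1 := by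
  cases n with
  | zero => exact hε
  | succ n =>
    have hne := (irrational_gaussMap_iterate hirr (n + 1)).ne_zero
    rw [Function.iterate_succ_apply'] at hne ⊢
    exact ⟨(Int.fract_nonneg _).lt_of_ne' hne, Int.fract_lt_one _⟩

theorem cfa_add_gaussMap_iterate_succ (n : ℕ) :
    cfa ε n + gaussMap^[n + 1] ε = (gaussMap^[n] ε)⁻¹ := by
  have hnonneg : 0 ≤ (gaussMap^[n] ε)⁻¹ :=
    inv_nonneg.2 (gaussMap_iterate_mem_Ioo hirr hε n).1.le
  rw [Function.iterate_succ_apply', cfa, natCast_floor_eq_intCast_floor hnonneg]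
  exact Int.floor_add_fract _

theorem one_le_cfa (n : ℕ) : 1 ≤ cfa ε n := by
  obtain ⟨hpos, hlt⟩ := gaussMap_iterate_mem_Ioo hirr hε n
  exact Nat.le_floor (by simpa using (one_le_inv₀ hpos).2 hlt.le)

theorem qq_succ_pos (n : ℕ) : 0 < qq ε (n + 1) := by
  induction n with
  | zero => exact one_pos
  | succ n ih => exact Nat.add_pos_left (Nat.mul_pos (one_le_cfa hirr hε n) ih) _

theorem gaussProd_pos (n : ℕ) : 0 < gaussProd ε n :=
  Finset.prod_pos fun i _ => (gaussMap_iterate_mem_Ioo hirr hε i).1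

theorem cfa_mul_gaussProd_add (n : ℕ) :
    cfa ε n * gaussProd ε (n + 1) + gaussProd ε (n + 2) = gaussProd ε n := by
  have hne : gaussMap^[n] ε ≠ 0 := (gaussMap_iterate_mem_Ioo hirr hε n).1.ne'
  calc cfa ε n * gaussProd ε (n + 1) + gaussProd ε (n + 2)
      = gaussProd ε n * gaussMap^[n] ε * (cfa ε n + gaussMap^[n + 1] ε) := by
        simp only [gaussProd, Finset.prod_range_succ]
        ring
    _ = gaussProd ε n := by
        rw [cfa_add_gaussMap_iterate_succ hirr hε, mul_inv_cancel_right₀ hne]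

theorem exists_qq_mul_sub_eq (n : ℕ) :
    ∃ p : ℤ, qq ε n * ε - p = (-1) ^ (n + 1) * gaussProd ε n := by
  induction n using Nat.twoStepInduction with
  | zero => exact ⟨1, by simp [qq, gaussProd]⟩
  | one => exact ⟨0, by simp [qq, gaussProd]⟩
  | more n ih₀ ih₁ =>
    obtain ⟨p₀, hp₀⟩ := ih₀
    obtain ⟨p₁, hp₁⟩ := ih₁
    refine ⟨cfa ε n * p₁ + p₀, ?_⟩
    rw [qq]
    push_cast
    linear_combination
      cfa ε n * hp₁ + hp₀ - (-1) ^ (n + 1) * cfa_mul_gaussProd_add hirr hε n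

theorem qq_succ_mul_gaussProd_add (n : ℕ) :
    qq ε (n + 1) * gaussProd ε n + qq ε n * gaussProd ε (n + 1) = 1 := by
  induction n with
  | zero => simp [qq, gaussProd]
  | succ n ih =>
    rw [qq]
    push_cast
    linear_combination ih + qq ε (n + 1) * cfa_mul_gaussProd_add hirr hε n

theorem exists_cfa_mul_qq_mul_abs_lt_one (n : ℕ) :
    ∃ p : ℤ, cfa ε n * qq ε (n + 1) * |qq ε (n + 1) * ε - p| < 1 := by
  obtain ⟨p, hp⟩ := exists_qq_mul_sub_eq hirr hε (n + 1)
  refine ⟨p, ?_⟩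
  have hq : (0 : ℝ) < qq ε (n + 1) := mod_cast qq_succ_pos hirr hε n
  have hβ := gaussProd_pos hirr hε
  calc cfa ε n * qq ε (n + 1) * |qq ε (n + 1) * ε - p|
      = qq ε (n + 1) * (cfa ε n * gaussProd ε (n + 1)) := by
        rw [hp, abs_mul, abs_neg_one_pow, one_mul, abs_of_pos (hβ _)]
        ring
    _ < qq ε (n + 1) * gaussProd ε n := by
        gcongr
        linarith [cfa_mul_gaussProd_add hirr hε n, hβ (n + 2)]
    _ ≤ 1 := by
        rw [← qq_succ_mul_gaussProd_add hirr hε n]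
        exact le_add_of_nonneg_right (mul_nonneg (Nat.cast_nonneg _) (hβ _).le)

end ContinuedFraction

/-! ### Powers in infinite words -/

section Words

variable {α : Type*} {u : ℕ → α} {w w' : List α}

theorem IsFactor.of_infix (h : IsFactor w' u) (hw : w <:+: w') : IsFactor w u := by
  obtain ⟨i, hi⟩ := h
  obtain ⟨s, t, rfl⟩ := hw
  refine ⟨i + s.length, ?_⟩
  simp only [List.length_append, List.range_add, List.map_append, List.map_map] at hi
  simpa [Function.comp_def, add_assoc] using
    (List.append_inj (List.append_inj hi (by simp)).1 (by simp)).2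

theorem isFactor_map_range (u : ℕ → α) (m : ℕ) : IsFactor ((List.range m).map u) u :=
  ⟨0, by simp⟩

theorem powPrefix_mul_length [Inhabited α] (w : List α) (k : ℕ) :
    powPrefix w (k * w.length) = (List.replicate k w).flatten := by
  have hw : w = (List.range w.length).map fun j => w.getD (j % w.length) default :=
    List.ext_getElem (by simp) fun j hj _ => by simp [Nat.mod_eq_of_lt hj, hj]
  induction k with
  | zero => simp [powPrefix]
  | succ k ih =>
    rw [List.replicate_succ, List.flatten_cons, ← ih, powPrefix, Nat.succ_mul,
      Nat.add_comm, List.range_add, List.map_append, ← hw, List.map_map]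
    simp [powPrefix, Function.comp_def]

theorem natCast_le_wordIndex [Inhabited α] {k : ℕ} (hk : k ≠ 0) (hw : w ≠ [])
    (h : IsFactor (List.replicate k w).flatten u) : (k : EReal) ≤ wordIndex u := by
  have hwu : IsFactor w u :=
    h.of_infix (List.infix_of_mem_flatten (List.mem_replicate.2 ⟨hk, rfl⟩))
  have hlen : (w.length : ℝ) ≠ 0 := by simpa using hw
  have hpow : (k : EReal) ≤ factorIndex u w := by
    refine le_sSup ⟨k * w.length, Nat.le_mul_of_pos_left _ (Nat.pos_of_ne_zero hk), ?_, ?_⟩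
    · rwa [powPrefix_mul_length]
    · rw [Nat.cast_mul, mul_div_cancel_right₀ _ hlen]
      rfl
  exact hpow.trans (le_sSup ⟨w, hw, hwu, rfl⟩)

theorem one_le_wordIndex [Inhabited α] (u : ℕ → α) : 1 ≤ wordIndex u := by
  have h : IsFactor (List.replicate 1 [u 0]).flatten u := isFactor_map_range u 1
  exact_mod_cast natCast_le_wordIndex one_ne_zero (List.cons_ne_nil _ _) h

theorem filterMap_range_mul_of_period {v : ℕ → Option α} {q k : ℕ}
    (hper : ∀ i, i + q < k * q → v (i + q) = v i) :
    (List.range (k * q)).filterMap v =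
      (List.replicate k ((List.range q).filterMap v)).flatten := by
  induction k with
  | zero => simp
  | succ k ih =>
    have hshift : (List.range (k * q)).filterMap (fun i => v (q + i)) =
        (List.range (k * q)).filterMap v :=
      List.filterMap_congr fun i hi => by
        rw [Nat.add_comm, hper i]
        linarith [List.mem_range.1 hi]
    rw [List.replicate_succ, List.flatten_cons, ← ih fun i hi => hper i (by linarith), ← hshift,
      Nat.succ_mul, Nat.add_comm, List.range_add, List.filterMap_append, List.filterMap_map]
    rfl

/-- Erasing the blanks (`none`) from the word `v` leaves the word `u`, expressed through prefixes:
every prefix of `v` becomes a prefix of `u`. If `v` has only finitely many letters, this constrains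
only a prefix of `u`. -/
def ErasesTo (v : ℕ → Option α) (u : ℕ → α) : Prop :=
  ∀ n, ∃ m, (List.range n).filterMap v = (List.range m).map u

theorem ErasesTo.isFactor_filterMap {v : ℕ → Option α} (h : ErasesTo v u) (j n : ℕ) :
    IsFactor ((List.range n).filterMap fun i => v (j + i)) u := by
  obtain ⟨m, hm⟩ := h (j + n)
  refine (isFactor_map_range u m).of_infix ?_
  rw [← hm, List.range_add, List.filterMap_append, List.filterMap_map]
  exact (List.suffix_append _ _).isInfix

theorem ErasesTo.natCast_le_wordIndex [Inhabited α] {v : ℕ → Option α} (h : ErasesTo v u)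
    (hblank : ∀ i, v i = none → v (i + 1) ≠ none) {j k q : ℕ} (hk : 2 ≤ k) (hq : 0 < q)
    (hper : ∀ i, i + q < k * q → v (j + (i + q)) = v (j + i)) :
    (k : EReal) ≤ wordIndex u := by
  have hpow := filterMap_range_mul_of_period (v := fun i => v (j + i)) hper
  refine _root_.natCast_le_wordIndex (by omega) (fun hnil => ?_)
    (hpow ▸ h.isFactor_filterMap j (k * q))
  rw [hnil, List.flatten_replicate_nil, List.filterMap_eq_nil_iff] at hpow
  have hlen : 2 ≤ k * q := Nat.mul_le_mul hk hq
  exact hblank j (hpow 0 (List.mem_range.2 (by omega))) (hpow 1 (List.mem_range.2 (by omega)))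

end Words

/-! ### Arcs of the circle -/

/-- The closed arc of the circle `ℝ / ℤ` with endpoints `t` and `t - θ` avoids `c`, stated as: its
midpoint `t - θ / 2` is at distance more than `|θ| / 2` from `c`. -/
def ArcAvoids (θ c t : ℝ) : Prop := |θ| / 2 < ‖((t - c - θ / 2 : ℝ) : UnitAddCircle)‖

section ArcAvoids

variable {θ c t : ℝ}

theorem ArcAvoids.sub_lt_add_intCast_iff (h : ArcAvoids θ c t) (m : ℤ) :
    t - θ < c + m ↔ t < c + m := by
  have hm : |θ| / 2 < |t - c - θ / 2 - m| :=
    h.trans_le (UnitAddCircle.norm_eq.trans_le (round_le _ m))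
  have := le_abs_self θ
  have := neg_abs_le θ
  rcases lt_abs.1 hm with hm | hm <;> constructor <;> intro <;> linarith

theorem ArcAvoids.floor_sub_eq (h : ArcAvoids θ 0 t) : ⌊t - θ⌋ = ⌊t⌋ :=
  eq_of_forall_gt_iff fun m => by
    simpa only [Int.floor_lt, zero_add] using h.sub_lt_add_intCast_iff m

theorem ArcAvoids.fract_sub_lt_iff (h0 : ArcAvoids θ 0 t) (hc : ArcAvoids θ c t) :
    Int.fract (t - θ) < c ↔ Int.fract t < c := by
  simpa only [Int.fract, h0.floor_sub_eq, sub_lt_iff_lt_add] using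
    hc.sub_lt_add_intCast_iff ⌊t⌋

theorem arcAvoids_sub_right_iff (s : ℝ) : ArcAvoids θ c (t - s) ↔ ArcAvoids θ (c + s) t := by
  rw [ArcAvoids, ArcAvoids, sub_sub t s, add_comm s c]

theorem arcAvoids_sub_one_iff : ArcAvoids θ (c - 1) t ↔ ArcAvoids θ c t := by
  have hcoe : ((t - (c - 1) - θ / 2 : ℝ) : UnitAddCircle) = (t - c - θ / 2 : ℝ) := by
    rw [show t - (c - 1) - θ / 2 = t - c - θ / 2 + 1 by ring, AddCircle.coe_add_period]
  rw [ArcAvoids, ArcAvoids, hcoe]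

end ArcAvoids

theorem exists_forall_mem_lt_dist_of_denseRange {ι β : Type*} (s : Finset ι) (c : ι → UnitAddCircle)
    {r : ℝ} (hr : s.card * (2 * r) < 1) {f : β → UnitAddCircle} (hf : DenseRange f) :
    ∃ b, ∀ i ∈ s, r < dist (f b) (c i) := by
  set S : Set UnitAddCircle := ⋃ i ∈ s, Metric.closedBall (c i) r with hS
  have hvol : MeasureTheory.volume S < 1 := by
    calc MeasureTheory.volume S
        ≤ ∑ i ∈ s, MeasureTheory.volume (Metric.closedBall (c i) r) :=
          MeasureTheory.measure_biUnion_finset_le _ _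
      _ ≤ ∑ _i ∈ s, ENNReal.ofReal (2 * r) := by
          gcongr
          rw [AddCircle.volume_closedBall]
          exact ENNReal.ofReal_le_ofReal (min_le_right _ _)
      _ = ENNReal.ofReal (s.card * (2 * r)) := by
          rw [Finset.sum_const, ← ENNReal.ofReal_nsmul, nsmul_eq_mul]
      _ < 1 := by rwa [ENNReal.ofReal_lt_one]
  have hne : Sᶜ.Nonempty := by
    rw [Set.nonempty_compl]
    intro huniv
    rw [huniv, UnitAddCircle.measure_univ] at hvol
    exact hvol.false
  have hclosed : IsClosed S := isClosed_biUnion_finset fun i _ => Metric.isClosed_closedBall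
  obtain ⟨b, hb⟩ := hf.exists_mem_open hclosed.isOpen_compl hne
  exact ⟨b, by simpa [hS] using hb⟩

theorem denseRange_coe_sub_mul_of_irrational {ε : ℝ} (hirr : Irrational ε) (x : ℝ) :
    DenseRange fun j : ℕ => ((x - j * ε : ℝ) : UnitAddCircle) := by
  have hdense : DenseRange fun j : ℕ => j • (ε : UnitAddCircle) := by
    rw [← denseRange_zsmul_iff_nsmul, AddCircle.denseRange_zsmul_coe_iff, div_one]
    exact hirr
  have hsurj := (Homeomorph.subLeft (x : UnitAddCircle)).surjective
  simpa [Function.comp_def] using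
    hsurj.denseRange.comp hdense (Homeomorph.subLeft (x : UnitAddCircle)).continuous

theorem exists_forall_arcAvoids {ε θ : ℝ} {N : ℕ} (hirr : Irrational ε) (ℓ x : ℝ)
    (hN : 2 * N * |θ| < 1) :
    ∃ j : ℕ, ∀ i < N, ∀ c ∈ ({0, ℓ} : Finset ℝ), ArcAvoids θ c (x - (j + i : ℕ) * ε) := by
  have hcard : ((Finset.range N ×ˢ {0, ℓ}).card : ℝ) * (2 * (|θ| / 2)) < 1 := by
    have hle : ((Finset.range N ×ˢ ({0, ℓ} : Finset ℝ)).card : ℝ) ≤ 2 * N := by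
      rw [Finset.card_product, Finset.card_range, mul_comm]
      exact_mod_cast Nat.mul_le_mul_right N Finset.card_le_two
    calc _ ≤ 2 * N * (2 * (|θ| / 2)) := by gcongr
      _ < 1 := by linarith
  obtain ⟨j, hj⟩ := exists_forall_mem_lt_dist_of_denseRange _
    (fun a : ℕ × ℝ => ((a.1 * ε + a.2 + θ / 2 : ℝ) : UnitAddCircle)) hcard
    (denseRange_coe_sub_mul_of_irrational hirr x)
  refine ⟨j, fun i hi c hc => ?_⟩
  have hdist := hj (i, c) (Finset.mk_mem_product (Finset.mem_range.2 hi) hc)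
  rw [dist_eq_norm, ← AddCircle.coe_sub] at hdist
  have hmid : x - (j + i : ℕ) * ε - c - θ / 2 = x - j * ε - (i * ε + c + θ / 2) := by
    push_cast
    ring
  rwa [ArcAvoids, hmid]

/-! ### The coding of the rotation with blanks -/

theorem T2_fract {ε : ℝ} (hε : ε ∈ Set.Icc 0 1) (t : ℝ) :
    T2 ε (Int.fract t) = Int.fract (t - ε) := by
  obtain ⟨h0, h1⟩ := hε
  have hnonneg := Int.fract_nonneg t
  have hlt := Int.fract_lt_one t
  have hadd := Int.floor_add_fract t
  symm
  unfold T2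
  split_ifs with h
  · exact Int.fract_eq_iff.2 ⟨by linarith, by linarith, ⌊t⌋ - 1, by push_cast; linarith⟩
  · exact Int.fract_eq_iff.2 ⟨by linarith, by linarith, ⌊t⌋, by linarith⟩

/-- The symbol of a point `t` of the circle `ℝ / ℤ`: the letter of `T3 ε ℓ` on `[0, ℓ)`, and a blank
on `[ℓ, 1)`. -/
noncomputable def blankedLetter (ε ℓ t : ℝ) : Option L3 :=
  if Int.fract t < ℓ then some (u3 ε ℓ (Int.fract t) 0) else none

/-- The first point of the forward `T2 ε`-orbit of `z ∈ [0, 1)` that lies in `[0, ℓ)`; one step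
suffices because `1 - ε < ℓ`. -/
noncomputable def firstEntry (ε ℓ z : ℝ) : ℝ := if z < ℓ then z else T2 ε z

theorem blankedLetter_sub_intCast (ε ℓ t : ℝ) (p : ℤ) :
    blankedLetter ε ℓ (t - p) = blankedLetter ε ℓ t := by
  rw [blankedLetter, blankedLetter, Int.fract_sub_intCast]

theorem blankedLetter_sub_eq {ε ℓ θ t : ℝ} (h0 : ArcAvoids θ 0 t) (hℓ : ArcAvoids θ ℓ t)
    (h0' : ArcAvoids θ 0 (t - ε)) (hℓ' : ArcAvoids θ ℓ (t - ε)) :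
    blankedLetter ε ℓ (t - θ) = blankedLetter ε ℓ t := by
  have hε : ArcAvoids θ ε t := by simpa [arcAvoids_sub_right_iff] using h0'
  have hA : ArcAvoids θ (ℓ - 1 + ε) t := by
    rwa [← arcAvoids_sub_right_iff, arcAvoids_sub_one_iff]
  have hletter : u3 ε ℓ (Int.fract (t - θ)) 0 = u3 ε ℓ (Int.fract t) 0 :=
    if_congr (h0.fract_sub_lt_iff hA) rfl (if_congr (h0.fract_sub_lt_iff hε) rfl rfl)
  exact if_congr (h0.fract_sub_lt_iff hℓ) (congrArg some hletter) rfl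

section Coding

variable {ε ℓ : ℝ} (hl : max ε (1 - ε) < ℓ)
include hl

theorem firstEntry_T2 {z : ℝ} (hz : z < 1) (hl1 : ℓ ≤ 1) :
    firstEntry ε ℓ (T2 ε z) = if z < ℓ then T3 ε ℓ z else firstEntry ε ℓ z := by
  obtain ⟨hεℓ, hεℓ'⟩ := max_lt_iff.1 hl
  unfold firstEntry T2 T3
  split_ifs <;> linarith

variable (hl1 : ℓ ≤ 1)
include hl1

theorem mem_Ioo_of_max_lt : ε ∈ Set.Ioo 0 1 := by
  obtain ⟨hεℓ, hεℓ'⟩ := max_lt_iff.1 hl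
  exact ⟨by linarith, by linarith⟩

theorem firstEntry_fract_sub (t : ℝ) : firstEntry ε ℓ (Int.fract (t - ε)) =
    if Int.fract t < ℓ then T3 ε ℓ (Int.fract t) else firstEntry ε ℓ (Int.fract t) := by
  rw [← T2_fract (Set.Ioo_subset_Icc_self (mem_Ioo_of_max_lt hl hl1)),
    firstEntry_T2 hl (Int.fract_lt_one t) hl1]

theorem blankedLetter_sub_ne_none {t : ℝ} (ht : blankedLetter ε ℓ t = none) :
    blankedLetter ε ℓ (t - ε) ≠ none := by
  obtain ⟨hεℓ, hεℓ'⟩ := max_lt_iff.1 hl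
  have hle : ℓ ≤ Int.fract t := by simpa [blankedLetter] using ht
  have hlt : Int.fract (t - ε) < ℓ := by
    rw [← T2_fract (Set.Ioo_subset_Icc_self (mem_Ioo_of_max_lt hl hl1)), T2,
      if_neg (hεℓ.trans_le hle).not_gt]
    linarith [Int.fract_lt_one t]
  simp [blankedLetter, hlt]

theorem erasesTo_u3 {x0 : ℝ} (hx0 : x0 ∈ Set.Ico 0 ℓ) :
    ErasesTo (fun n => blankedLetter ε ℓ (x0 - n * ε)) (u3 ε ℓ x0) := by
  -- For the induction one also records that, after `m` letters, `T3` has arrived at the next point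
  -- of the rotation orbit in `[0, ℓ)`.
  suffices h : ∀ n : ℕ, ∃ m,
      (List.range n).filterMap (fun i : ℕ => blankedLetter ε ℓ (x0 - i * ε)) =
        (List.range m).map (u3 ε ℓ x0) ∧
      (T3 ε ℓ)^[m] x0 = firstEntry ε ℓ (Int.fract (x0 - n * ε)) from
    fun n => (h n).imp fun m => And.left
  intro n
  induction n with
  | zero =>
    have hfract : Int.fract x0 = x0 := Int.fract_eq_self.2 ⟨hx0.1, hx0.2.trans_le hl1⟩
    exact ⟨0, by simp, by simp [hfract, firstEntry, hx0.2]⟩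
  | succ n ih =>
    obtain ⟨m, hword, horbit⟩ := ih
    rw [List.range_succ, List.filterMap_append, hword, Nat.cast_succ, add_one_mul, ← sub_sub,
      firstEntry_fract_sub hl hl1]
    by_cases hvisible : Int.fract (x0 - n * ε) < ℓ
    · rw [firstEntry, if_pos hvisible] at horbit
      have hletter : blankedLetter ε ℓ (x0 - n * ε) = some (u3 ε ℓ x0 m) := by
        rw [blankedLetter, if_pos hvisible, ← horbit]
        rfl
      refine ⟨m + 1, by simp [hletter, List.range_succ], ?_⟩
      rw [Function.iterate_succ_apply', horbit, if_pos hvisible]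
    · refine ⟨m, by simp [blankedLetter, hvisible], ?_⟩
      rw [horbit, if_neg hvisible]

theorem natCast_le_wordIndex_u3 (hirr : Irrational ε) {x0 : ℝ} (hx0 : x0 ∈ Set.Ico 0 ℓ)
    {k q : ℕ} {p : ℤ} (hq : 0 < q) (hkq : 2 * (k * q : ℕ) * |q * ε - p| < 1) :
    (k : EReal) ≤ wordIndex (u3 ε ℓ x0) := by
  rcases Nat.lt_or_ge k 2 with hk | hk
  · exact le_trans (mod_cast Nat.le_of_lt_succ hk) (one_le_wordIndex _)
  obtain ⟨j, hj⟩ := exists_forall_arcAvoids hirr ℓ x0 hkq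
  refine (erasesTo_u3 hl hl1 hx0).natCast_le_wordIndex (j := j) (fun i hi => ?_) hk hq
    fun i hi => ?_
  · rw [Nat.cast_succ, add_one_mul, ← sub_sub]
    exact blankedLetter_sub_ne_none hl hl1 hi
  · have havoid := hj i (by omega)
    have havoid' := hj (i + 1) (by omega)
    rw [← add_assoc, Nat.cast_succ, add_one_mul, ← sub_sub] at havoid'
    calc blankedLetter ε ℓ (x0 - (j + (i + q) : ℕ) * ε)
        = blankedLetter ε ℓ (x0 - (j + i : ℕ) * ε - (q * ε - p) - p) := by
          congr 1
          push_cast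
          ring
      _ = blankedLetter ε ℓ (x0 - (j + i : ℕ) * ε - (q * ε - p)) :=
          blankedLetter_sub_intCast ..
      _ = blankedLetter ε ℓ (x0 - (j + i : ℕ) * ε) :=
          blankedLetter_sub_eq (havoid 0 (by simp)) (havoid ℓ (by simp)) (havoid' 0 (by simp))
            (havoid' ℓ (by simp))

end Coding

theorem threeIet_index_ge_sup_half_partial_quotients_general {ε ℓ x0 : ℝ} (hirr : Irrational ε)
    (hl : max ε (1 - ε) < ℓ) (hl1 : ℓ ≤ 1) (hx0 : x0 ∈ Set.Ico 0 ℓ) :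
    (⨆ n : ℕ, ((cfa ε n / 2 : ℕ) : EReal)) ≤ wordIndex (u3 ε ℓ x0) := by
  have hε := mem_Ioo_of_max_lt hl hl1
  refine iSup_le fun n => ?_
  obtain ⟨p, hp⟩ := exists_cfa_mul_qq_mul_abs_lt_one hirr hε n
  have hhalf : 2 * (cfa ε n / 2 * qq ε (n + 1)) ≤ cfa ε n * qq ε (n + 1) := by
    rw [← mul_assoc]
    exact Nat.mul_le_mul_right _ (Nat.mul_div_le _ 2)
  refine natCast_le_wordIndex_u3 hl hl1 hirr hx0 (qq_succ_pos hirr hε n) (p := p) ?_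
  exact (mul_le_mul_of_nonneg_right (mod_cast hhalf) (abs_nonneg _)).trans_lt hp

/-- if the partial quotients of `ε` are bounded, then the index of the
3iet word is at least `sup_n ⌊a_n / 2⌋`. -/
theorem threeIet_index_ge_sup_half_partial_quotients
    (ε ℓ x0 : ℝ) (hirr : Irrational ε) (h0 : 0 < ε) (h1 : ε < 1)
    (hl : max ε (1 - ε) < ℓ) (hl1 : ℓ < 1) (hx0 : x0 ∈ Set.Ico 0 ℓ)
    (hbdd : ∃ K : ℕ, ∀ n : ℕ, cfa ε n ≤ K) :
    (⨆ n : ℕ, ((cfa ε n / 2 : ℕ) : EReal)) ≤ wordIndex (u3 ε ℓ x0) :=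
  threeIet_index_ge_sup_half_partial_quotients_general hirr hl hl1.le hx0
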